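/- arXiv:1810.12905 — 2 statements merged into one kernel-verified Lean document; each statement's English description precedes it below -/
import Mathlib

section
/- Let ν = (ν_1 ≤ … ≤ ν_N), ν̃ = (ν̃_1 ≤ … ≤ ν̃_N) be weakly increasing sequences of nonnegative integers with ν_N = ν̃_N. Then the polynomial Φ_{ν|ν̃}(z;t) evaluated at z = 1 satisfies Φ_{ν|ν̃}(1;t) = ∏_{j=1}^{N-1} C(ν̃_{j+1}, ν̃_j)_t. -/
/-!
At `z = 1` the sum defining `Φ` collapses to a single term. In the factor `j = 1` the Pochhammer
symbol is `(1;t)_{σ_1-λ_1}`, which vanishes unless `λ_1 = σ_1`. If `λ_i = σ_i` for all `i < j`,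
then `λ_{1,j-1} = ν_{j-1}` by telescoping, so the Pochhammer symbol of the factor `j` is again
`(1;t)_{σ_j-λ_j}`; hence a tuple `λ ≠ σ` is killed by the factor at the least `j` where
`λ_j ≠ σ_j` (`pochh_one_eq_zero`, `lamsum_eq_nuc`). In the remaining term `λ = σ` the factor `j` is
`C(σ_j,σ_j)_t · C(ν̃_{j+1}, ν̃_j)_t`, and `C(σ_j,σ_j)_t = 1`.
-/


open Finset

noncomputable section

attribute [local instance] Classical.propDecidable

/-- The Gaussian binomial coefficient `C(a,b)_t` for natural arguments,
as a polynomial in `t` (it vanishes when `b > a`). -/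
def gaussNat : ℕ → ℕ → Polynomial ℤ
  | _, 0 => 1
  | 0, _ + 1 => 0
  | a + 1, b + 1 => gaussNat a b + Polynomial.X ^ (b + 1) * gaussNat a (b + 1)

/-- The Gaussian binomial coefficient `C(a,b)_t ∈ ℤ[t]`, set to `0` unless `a ≥ b ≥ 0`. -/
def gaussInt (a b : ℤ) : Polynomial ℤ :=
  if 0 ≤ b ∧ b ≤ a then gaussNat a.toNat b.toNat else 0

/-- The t-Pochhammer symbol `(w;t)_k = ∏_{i=0}^{k-1} (1 - w tⁱ)`. -/
def pochh {R : Type*} [CommRing R] (w t : R) (k : ℕ) : R :=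
  ∏ i ∈ Finset.range k, (1 - w * t ^ i)

/-- `ν` with the convention `ν₀ = 0` (natural-number version). -/
def nuc (ν : ℕ → ℕ) (k : ℕ) : ℕ := if k = 0 then 0 else ν k

/-- `σ_i = ν_i - ν_{i-1}`. -/
def sigv (ν : ℕ → ℕ) (i : ℕ) : ℕ := nuc ν i - nuc ν (i - 1)

/-- Accessor for the summation variables `λ_j`, `1 ≤ j ≤ N-1`. -/
def lamv (N : ℕ) (f : Fin (N - 1) → ℕ) (j : ℕ) : ℕ :=
  if h : j - 1 < N - 1 then f ⟨j - 1, h⟩ else 0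

/-- Partial sums `λ_{1,j} = λ_1 + … + λ_j`. -/
def lamsum (N : ℕ) (f : Fin (N - 1) → ℕ) (j : ℕ) : ℕ :=
  ∑ a ∈ Finset.Icc 1 j, lamv N f a

/-- The polynomial `Φ_{ν|nt}(z;t) ∈ ℤ[z,t]` (the finite-sum form), as an element of
`(ℤ[t])[z]` (outer variable `z`, inner variable `t`). -/
def PhiPoly (N : ℕ) (ν nt : ℕ → ℕ) : Polynomial (Polynomial ℤ) :=
  ∑ f ∈ Fintype.piFinset (fun j : Fin (N - 1) => Finset.range (sigv ν ((j : ℕ) + 1) + 1)),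
    ∏ j ∈ Finset.Icc 1 (N - 1),
      (((Polynomial.X : Polynomial (Polynomial ℤ)) *
            Polynomial.C (Polynomial.X ^ (nuc ν (j - 1) - lamsum N f (j - 1)))) ^
          (lamv N f j) *
        pochh (R := Polynomial (Polynomial ℤ)) (Polynomial.X *
            Polynomial.C (Polynomial.X ^ (nuc ν (j - 1) - lamsum N f (j - 1))))
          (Polynomial.C Polynomial.X) (sigv ν j - lamv N f j) *
        Polynomial.C (gaussInt (sigv ν j) (lamv N f j)) *
        Polynomial.C
          (gaussInt ((nt (j + 1) : ℤ) - (ν j : ℤ) + lamsum N f j)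
            ((nt j : ℤ) - (ν j : ℤ) + lamsum N f j)))

lemma gaussNat_of_lt : ∀ a b : ℕ, a < b → gaussNat a b = 0
  | _, 0, h => absurd h (Nat.not_lt_zero _)
  | 0, _ + 1, _ => by rw [gaussNat]
  | a + 1, b + 1, h => by
    rw [gaussNat, gaussNat_of_lt a b (by omega), gaussNat_of_lt a (b + 1) (by omega)]
    simp

lemma gaussNat_self : ∀ a : ℕ, gaussNat a a = 1
  | 0 => by rw [gaussNat]
  | a + 1 => by
    rw [gaussNat, gaussNat_self a, gaussNat_of_lt a (a + 1) (by omega)]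
    simp

lemma gaussInt_self (a : ℕ) : gaussInt a a = 1 := by
  simp [gaussInt, gaussNat_self]

/-- The factor `i = 0` of `(1;t)_k` is `1 - 1`. -/
lemma pochh_one_eq_zero {R : Type*} [CommRing R] (t : R) {k : ℕ} (hk : 0 < k) :
    pochh 1 t k = 0 :=
  Finset.prod_eq_zero (Finset.mem_range.2 hk) (by simp)

lemma eval_pochh {R : Type*} [CommRing R] (x : R) (w t : Polynomial R) (k : ℕ) :
    Polynomial.eval x (pochh w t k) = pochh (Polynomial.eval x w) (Polynomial.eval x t) k := by
  simp [pochh, Polynomial.eval_prod]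

/-- Telescoping: if `λ_i = σ_i` for all `1 ≤ i ≤ m`, then `λ_{1,m} = ν_m`. -/
lemma lamsum_eq_nuc (N : ℕ) (ν : ℕ → ℕ) (hν : ∀ k, 1 ≤ k → k < N → ν k ≤ ν (k + 1))
    (f : Fin (N - 1) → ℕ) (m : ℕ) (hm : m ≤ N - 1)
    (h : ∀ i, 1 ≤ i → i ≤ m → lamv N f i = sigv ν i) :
    lamsum N f m = nuc ν m := by
  induction m with
  | zero => simp [lamsum, nuc]
  | succ m ih =>
    have ih' := ih (by omega) (fun i h1 h2 => h i h1 (by omega))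
    have hle : nuc ν m ≤ nuc ν (m + 1) := by
      rcases Nat.eq_zero_or_pos m with rfl | hm0
      · simp [nuc]
      · simpa [nuc, hm0.ne'] using hν m hm0 (by omega)
    unfold lamsum at ih' ⊢
    rw [Finset.sum_Icc_succ_top (by omega), ih', h (m + 1) (by omega) le_rfl, sigv,
      Nat.add_sub_cancel]
    omega

theorem statement6 (N : ℕ) (hN : 1 ≤ N) (ν nt : ℕ → ℕ)
    (hν : ∀ k, 1 ≤ k → k < N → ν k ≤ ν (k + 1))
    (hnt : ∀ k, 1 ≤ k → k < N → nt k ≤ nt (k + 1))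
    (hlast : ν N = nt N) :
    Polynomial.eval (1 : Polynomial ℤ) (PhiPoly N ν nt) =
      ∏ j ∈ Finset.Icc 1 (N - 1), gaussInt (nt (j + 1)) (nt j) := by
  unfold PhiPoly
  rw [Polynomial.eval_finsetSum,
    Finset.sum_eq_single (fun j : Fin (N - 1) => sigv ν ((j : ℕ) + 1))]
  · set f : Fin (N - 1) → ℕ := fun j => sigv ν ((j : ℕ) + 1) with hf
    have hlam : ∀ i, 1 ≤ i → i ≤ N - 1 → lamv N f i = sigv ν i := by
      intro i h1 h2
      have h3 : i - 1 < N - 1 := by omega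
      simp [lamv, h3, hf, Nat.sub_add_cancel h1]
    have hsum : ∀ m, m ≤ N - 1 → lamsum N f m = nuc ν m := fun m hm =>
      lamsum_eq_nuc N ν hν f m hm (fun i h1 h2 => hlam i h1 (h2.trans hm))
    rw [Polynomial.eval_prod]
    refine Finset.prod_congr rfl fun j hj => ?_
    obtain ⟨h1, h2⟩ := Finset.mem_Icc.1 hj
    have hnuc : nuc ν j = ν j := by simp [nuc, show j ≠ 0 by omega]
    rw [hlam j h1 h2, hsum j h2, hsum (j - 1) (by omega), hnuc, gaussInt_self]
    simp [pochh]
  · intro f hf hne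
    -- the least index at which `λ` differs from `σ`
    have hex : ∃ j, 1 ≤ j ∧ j ≤ N - 1 ∧ lamv N f j ≠ sigv ν j := by
      by_contra! hcon
      refine hne (funext fun j => ?_)
      have := hcon (j + 1) (by omega) (by omega)
      simpa [lamv] using this
    obtain ⟨h1, h2, h3⟩ := Nat.find_spec hex
    have hmin := fun i hi => Nat.find_min (m := i) hex hi
    set j := Nat.find hex
    have hsum : lamsum N f (j - 1) = nuc ν (j - 1) :=
      lamsum_eq_nuc N ν hν f (j - 1) (by omega) fun i hi1 hi2 => by
        by_contra hc
        exact hmin i (by omega) ⟨hi1, by omega, hc⟩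
    have hlt : lamv N f j < sigv ν j := by
      have h4 : j - 1 < N - 1 := by omega
      have h5 := Finset.mem_range.1 (Fintype.mem_piFinset.1 hf ⟨j - 1, h4⟩)
      simp only [Nat.sub_add_cancel h1] at h5
      have h6 : lamv N f j = f ⟨j - 1, h4⟩ := by simp [lamv, h4]
      omega
    rw [Polynomial.eval_prod]
    refine Finset.prod_eq_zero (Finset.mem_Icc.2 ⟨h1, h2⟩) ?_
    simp [hsum, eval_pochh, pochh_one_eq_zero _ (Nat.sub_pos_of_lt hlt)]
  · intro h
    exact absurd (Fintype.mem_piFinset.2 fun j => Finset.mem_range.2 (Nat.lt_succ_self _)) h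
end
end

section
/- Let a, b, c, d be nonnegative integers with b ≤ c + d. Then the following identity holds in the Laurent polynomial ring ℤ[t, t^{-1}]: ∑_{k} t^{-k(b+c-k)} · ( ∏_{i=d-b+k+1}^{d-b+c} (1 - t^i) ) · C(b,k)_t · C(a, c-k)_t = ∑_{l=0}^{c} (-1)^l · t^{l(l+1)/2 + l d - b c} · C(a, l)_t · C(a+b-l, c-l)_t, where on the left k ranges over integers with b - d ≤ k ≤ min(b, c), C(b,k)_t := 0 for k < 0, and the product over i is 1 when empty. -/
/-!
Put `u = t ^ d`. The lower bound `b - d ≤ k` on the left is automatic: since `b ≤ c + d`, for smaller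
`k` the product contains the factor `1 - t ^ 0`. Both sides therefore make sense for `u = t ^ e` with
any integer `e`, and we compare

* `lhsSum a b c e = ∑_{k + m = c} t^{-k (b + m)} ∏_{j < m} (1 - u t^{k + j + 1 - b}) C(b, k) C(a, m)`,
* `rhsSum a b c e = ∑_{l + m = c} (-1)^l u^l t^{l (l + 1) / 2 - b c} C(a, l) C(a + b - l, m)`.

For `a = 0` both are `t^{-b c} C(b, c)`, for `c = 0` both are `1`, and both satisfy the recursion
`X (a + 1) b (c + 1) e = t^{c + 1} X a (b + 1) (c + 1) (e + 1) - t^{e + 1 - b} X a b c (e + 1)`.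
For `rhsSum` this is the Pascal rule `C(a + 1, l) = C(a, l - 1) + t^l C(a, l)`. For `lhsSum` one also needs the
dual Pascal rule for `C(b + 1, k)`, and then splits off the first factor of the product. Induction on
`a`, for all `b`, `c`, `e` at once, gives `lhsSum = rhsSum`.
-/

open Finset

noncomputable section

attribute [local instance] Classical.propDecidable

/-- The Gaussian binomial coefficient `C(a,b)_t` as a Laurent polynomial. -/
def gaussL (a b : ℕ) : LaurentPolynomial ℤ := Polynomial.toLaurent (gaussNat a b)

open LaurentPolynomial

lemma gaussL_zero_right (a : ℕ) : gaussL a 0 = 1 := by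
  cases a <;> simp [gaussL, gaussNat]

lemma gaussL_zero_succ (b : ℕ) : gaussL 0 (b + 1) = 0 := by
  simp [gaussL, gaussNat]

lemma gaussL_succ (a b : ℕ) :
    gaussL (a + 1) (b + 1) = gaussL a b + T ((b : ℤ) + 1) * gaussL a (b + 1) := by
  simp [gaussL, gaussNat, Polynomial.toLaurent_X_pow]

lemma gaussL_eq_zero (a b : ℕ) (h : a < b) : gaussL a b = 0 := by
  induction a generalizing b with
  | zero =>
    obtain ⟨b, rfl⟩ := Nat.exists_eq_succ_of_ne_zero (by omega : b ≠ 0)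
    exact gaussL_zero_succ b
  | succ a ih =>
    obtain ⟨b, rfl⟩ := Nat.exists_eq_succ_of_ne_zero (by omega : b ≠ 0)
    rw [Nat.succ_eq_add_one, gaussL_succ, ih b (by omega), ih (b + 1) (by omega)]
    simp

/-- The dual Pascal rule. With an integer exponent it holds without assuming `b ≤ a`. -/
lemma gaussL_succ' (a b : ℕ) :
    gaussL (a + 1) (b + 1) = T ((a : ℤ) - b) * gaussL a b + gaussL a (b + 1) := by
  induction a generalizing b with
  | zero =>
    cases b with
    | zero => simp [gaussL_succ, gaussL_zero_right, gaussL_zero_succ]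
    | succ b => simp [gaussL_succ, gaussL_zero_succ]
  | succ a ih =>
    cases b with
    | zero =>
      have h1 : (T (((0 : ℕ) : ℤ) + 1) : LaurentPolynomial ℤ) * T ((a : ℤ) - (0 : ℕ))
          = T (((a + 1 : ℕ) : ℤ) - (0 : ℕ)) := by
        rw [← T_add]; congr 1; push_cast; ring
      have e1 := gaussL_succ (a + 1) 0
      have e2 := gaussL_succ a 0
      have e3 := ih 0
      simp only [gaussL_zero_right] at *
      linear_combination e1 - e2 + T (((0 : ℕ) : ℤ) + 1) * e3 + h1
    | succ b =>
      have h1 : (T (((b + 1 : ℕ) : ℤ) + 1) : LaurentPolynomial ℤ) * T ((a : ℤ) - (b + 1 : ℕ))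
          = T ((a : ℤ) - b) * T ((b : ℤ) + 1) := by
        rw [← T_add, ← T_add]; congr 1; push_cast; ring
      have h2 : (((a + 1 : ℕ) : ℤ) - (b + 1 : ℕ)) = (a : ℤ) - b := by push_cast; ring
      rw [h2]
      linear_combination gaussL_succ (a + 1) (b + 1) + ih b +
        T (((b + 1 : ℕ) : ℤ) + 1) * ih (b + 1) - T ((a : ℤ) - b) * gaussL_succ a b -
        gaussL_succ a (b + 1) + gaussL a (b + 1) * h1

/-- The Pascal rule for `C(a + 1, k)` under a sum over `k + m = n + 1`. -/
lemma sum_pascal_fst (a n : ℕ) (h : ℕ → ℕ → LaurentPolynomial ℤ) :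
    ∑ p ∈ antidiagonal (n + 1), gaussL (a + 1) p.1 * h p.1 p.2 =
      ∑ p ∈ antidiagonal (n + 1), T (p.1 : ℤ) * gaussL a p.1 * h p.1 p.2 +
      ∑ p ∈ antidiagonal n, gaussL a p.1 * h (p.1 + 1) p.2 := by
  rw [Nat.sum_antidiagonal_succ, Nat.sum_antidiagonal_succ, add_assoc, ← sum_add_distrib]
  congr 1
  · simp [gaussL_zero_right]
  · refine sum_congr rfl fun p _ => ?_
    rw [gaussL_succ]
    push_cast
    ring

/-- The Pascal rule for `C(a + 1, m)` under a sum over `k + m = n + 1`. -/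
lemma sum_pascal_snd (a n : ℕ) (h : ℕ → ℕ → LaurentPolynomial ℤ) :
    ∑ p ∈ antidiagonal (n + 1), gaussL (a + 1) p.2 * h p.1 p.2 =
      ∑ p ∈ antidiagonal (n + 1), T (p.2 : ℤ) * gaussL a p.2 * h p.1 p.2 +
      ∑ p ∈ antidiagonal n, gaussL a p.2 * h p.1 (p.2 + 1) := by
  rw [Nat.sum_antidiagonal_succ', Nat.sum_antidiagonal_succ', add_assoc, ← sum_add_distrib]
  congr 1
  · simp [gaussL_zero_right]
  · refine sum_congr rfl fun p _ => ?_
    rw [gaussL_succ]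
    push_cast
    ring

/-- The dual Pascal rule for `C(b + 1, k)` under a sum over `k + m = n + 1`. -/
lemma sum_pascal_fst' (b n : ℕ) (h : ℕ → ℕ → LaurentPolynomial ℤ) :
    ∑ p ∈ antidiagonal (n + 1), gaussL (b + 1) p.1 * h p.1 p.2 =
      ∑ p ∈ antidiagonal (n + 1), gaussL b p.1 * h p.1 p.2 +
      ∑ p ∈ antidiagonal n, T ((b : ℤ) - p.1) * gaussL b p.1 * h (p.1 + 1) p.2 := by
  rw [Nat.sum_antidiagonal_succ, Nat.sum_antidiagonal_succ, add_assoc, ← sum_add_distrib]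
  congr 1
  · simp [gaussL_zero_right]
  · refine sum_congr rfl fun p _ => ?_
    rw [gaussL_succ']
    ring

/-- The product `∏_{i = x + 1}^{x + m} (1 - t^i)`. -/
def prodT (x : ℤ) (m : ℕ) : LaurentPolynomial ℤ := ∏ j ∈ range m, (1 - T (x + j + 1))

lemma prodT_succ (x : ℤ) (m : ℕ) : prodT x (m + 1) = (1 - T (x + 1)) * prodT (x + 1) m := by
  unfold prodT
  rw [prod_range_succ', mul_comm]
  congr 1
  · simp
  · refine prod_congr rfl fun j _ => ?_
    push_cast
    ring_nf

lemma prod_Icc_eq_prodT (x : ℤ) (m : ℕ) :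
    ∏ i ∈ Icc (x + 1) (x + m), (1 - T i : LaurentPolynomial ℤ) = prodT x m := by
  unfold prodT
  refine (prod_nbij (fun j : ℕ => x + j + 1) ?_ ?_ ?_ fun _ _ => rfl).symm
  · intro j hj
    simp only [mem_range, mem_Icc] at *
    omega
  · intro i _ j _ hij
    simp only at hij
    omega
  · intro i hi
    simp only [coe_Icc, Set.mem_Icc] at hi
    refine ⟨(i - x - 1).toNat, ?_, ?_⟩
    · simp only [coe_range, Set.mem_Iio]
      omega
    · simp only
      omega

/-- The left-hand side, indexed by `k + m = c`, with `t ^ d` replaced by `t ^ e`, `e ∈ ℤ`. -/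
def lhsSum (a b c : ℕ) (e : ℤ) : LaurentPolynomial ℤ :=
  ∑ p ∈ antidiagonal c,
    T (-((p.1 : ℤ) * (b + p.2))) * prodT (e - b + p.1) p.2 * gaussL b p.1 * gaussL a p.2

/-- The right-hand side, indexed by `l + m = c`, with `t ^ d` replaced by `t ^ e`, `e ∈ ℤ`.
The truncated subtraction `a + b - l` is harmless because `C(a, l) = 0` for `l > a`. -/
def rhsSum (a b c : ℕ) (e : ℤ) : LaurentPolynomial ℤ :=
  ∑ p ∈ antidiagonal c,
    (-1) ^ p.1 * T (((p.1 : ℤ) * (p.1 + 1)) / 2 + p.1 * e - b * c) * gaussL a p.1 *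
      gaussL (a + b - p.1) p.2

lemma lhsSum_succ (a b c : ℕ) (e : ℤ) :
    lhsSum (a + 1) b (c + 1) e =
      T ((c : ℤ) + 1) * lhsSum a (b + 1) (c + 1) (e + 1) -
        T (e + 1 - b) * lhsSum a b c (e + 1) := by
  have hL : lhsSum (a + 1) b (c + 1) e = _ := (sum_congr rfl fun p _ => by ring).trans
    (sum_pascal_snd a c fun k m =>
      T (-((k : ℤ) * (b + m))) * prodT (e - b + k) m * gaussL b k)
  have hR : lhsSum a (b + 1) (c + 1) (e + 1) = _ := (sum_congr rfl fun p _ => by ring).trans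
    (sum_pascal_fst' b c fun k m =>
      T (-((k : ℤ) * ((b + 1 : ℕ) + m))) * prodT (e + 1 - (b + 1 : ℕ) + k) m * gaussL a m)
  rw [hL, hR, lhsSum, mul_add, mul_sum, mul_sum, mul_sum, add_sub_assoc, ← sum_sub_distrib]
  congr 1
  · refine sum_congr rfl fun p hp => ?_
    obtain ⟨k, m⟩ := p
    have hkm : (k : ℤ) + m = c + 1 := by exact_mod_cast mem_antidiagonal.1 hp
    have h1 : (T (m : ℤ) : LaurentPolynomial ℤ) * T (-((k : ℤ) * (b + m)))
        = T ((c : ℤ) + 1) * T (-((k : ℤ) * ((b + 1 : ℕ) + m))) := by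
      rw [← T_add, ← T_add, ← hkm]; congr 1; push_cast; ring
    have h2 : e + 1 - ((b + 1 : ℕ) : ℤ) + k = e - b + k := by push_cast; ring
    simp only [h2]
    linear_combination prodT (e - b + k) m * gaussL b k * gaussL a m * h1
  · refine sum_congr rfl fun p hp => ?_
    obtain ⟨k, m⟩ := p
    have hkm : (k : ℤ) + m = c := by exact_mod_cast mem_antidiagonal.1 hp
    have h1 : (T (-((k : ℤ) * (b + (m + 1 : ℕ)))) : LaurentPolynomial ℤ)
        = T ((c : ℤ) + 1) * T ((b : ℤ) - k) * T (-(((k + 1 : ℕ) : ℤ) * ((b + 1 : ℕ) + m))) := by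
      rw [← T_add, ← T_add, ← hkm]; congr 1; push_cast; ring
    have h2 : e + 1 - ((b + 1 : ℕ) : ℤ) + (k + 1 : ℕ) = e - b + k + 1 := by push_cast; ring
    have h3 : e + 1 - (b : ℤ) + k = e - b + k + 1 := by ring
    have h4 : (T (-((k : ℤ) * (b + (m + 1 : ℕ)))) : LaurentPolynomial ℤ) * T (e - b + k + 1)
        = T (e + 1 - b) * T (-((k : ℤ) * (b + m))) := by
      rw [← T_add, ← T_add]; congr 1; push_cast; ring
    simp only [h2, h3, prodT_succ]
    linear_combination prodT (e - b + k + 1) m * gaussL b k * gaussL a m * (h1 - h4)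

lemma rhsSum_succ (a b c : ℕ) (e : ℤ) :
    rhsSum (a + 1) b (c + 1) e =
      T ((c : ℤ) + 1) * rhsSum a (b + 1) (c + 1) (e + 1) -
        T (e + 1 - b) * rhsSum a b c (e + 1) := by
  have hL : rhsSum (a + 1) b (c + 1) e = _ := (sum_congr rfl fun p _ => by ring).trans
    (sum_pascal_fst a c fun l m =>
      (-1) ^ l * T (((l : ℤ) * (l + 1)) / 2 + l * e - b * (c + 1 : ℕ)) *
        gaussL (a + 1 + b - l) m)
  rw [hL, rhsSum, rhsSum, mul_sum, mul_sum, sub_eq_add_neg, ← sum_neg_distrib]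
  congr 1
  · refine sum_congr rfl fun p _ => ?_
    obtain ⟨l, m⟩ := p
    have h1 : (T (l : ℤ) : LaurentPolynomial ℤ) *
          T (((l : ℤ) * (l + 1)) / 2 + l * e - b * (c + 1 : ℕ))
        = T ((c : ℤ) + 1) *
          T (((l : ℤ) * (l + 1)) / 2 + l * (e + 1) - (b + 1 : ℕ) * (c + 1 : ℕ)) := by
      rw [← T_add, ← T_add]; congr 1; push_cast; ring
    have h2 : a + (b + 1) - l = a + 1 + b - l := by omega
    simp only [h2]
    linear_combination (-1) ^ l * gaussL a l * gaussL (a + 1 + b - l) m * h1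
  · refine sum_congr rfl fun p _ => ?_
    obtain ⟨l, m⟩ := p
    have h0 : ((l + 1 : ℕ) : ℤ) * ((l + 1 : ℕ) + 1) / 2 = (l : ℤ) * (l + 1) / 2 + (l + 1) := by
      rw [← Int.add_mul_ediv_right _ _ (by norm_num : (2 : ℤ) ≠ 0)]
      congr 1; push_cast; ring
    have h1 : (T (((l + 1 : ℕ) : ℤ) * ((l + 1 : ℕ) + 1) / 2 + (l + 1 : ℕ) * e
            - b * (c + 1 : ℕ)) : LaurentPolynomial ℤ)
        = T (e + 1 - b) * T (((l : ℤ) * (l + 1)) / 2 + l * (e + 1) - b * c) := by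
      rw [h0, ← T_add]; congr 1; push_cast; ring
    have h2 : a + 1 + b - (l + 1) = a + b - l := by omega
    simp only [h1, h2]
    ring

lemma lhsSum_eq_rhsSum (a b c : ℕ) (e : ℤ) : lhsSum a b c e = rhsSum a b c e := by
  induction a generalizing b c e with
  | zero =>
    cases c with
    | zero => simp [lhsSum, rhsSum, prodT, gaussL_zero_right]
    | succ c =>
      rw [lhsSum, rhsSum, Nat.sum_antidiagonal_succ', Nat.sum_antidiagonal_succ]
      simp [gaussL_zero_right, gaussL_zero_succ, prodT, mul_comm (b : ℤ)]
  | succ a ih =>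
    cases c with
    | zero => simp [lhsSum, rhsSum, prodT, gaussL_zero_right]
    | succ c => rw [lhsSum_succ, rhsSum_succ, ih, ih]

lemma toLaurent_gaussInt (a b : ℕ) : Polynomial.toLaurent (gaussInt a b) = gaussL a b := by
  by_cases h : b ≤ a
  · simp [gaussInt, gaussL, h]
  · rw [gaussL_eq_zero a b (by omega)]
    simp [gaussInt, h]

lemma gaussInt_eq_zero (a b : ℤ) (h : b < 0 ∨ a < b) : gaussInt a b = 0 := by
  rw [gaussInt, if_neg (by omega)]

theorem statement12 (a b c d : ℕ) (hb : b ≤ c + d) :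
    ∑ k ∈ Finset.Icc ((b : ℤ) - d) (min (b : ℤ) (c : ℤ)),
        LaurentPolynomial.T (-(k * ((b : ℤ) + c - k))) *
          (∏ i ∈ Finset.Icc ((d : ℤ) - b + k + 1) ((d : ℤ) - b + c),
            (1 - LaurentPolynomial.T i)) *
          Polynomial.toLaurent (gaussInt b k) *
          Polynomial.toLaurent (gaussInt a ((c : ℤ) - k)) =
      ∑ l ∈ Finset.range (c + 1),
        (-1 : LaurentPolynomial ℤ) ^ l *
          LaurentPolynomial.T (((l : ℤ) * (l + 1)) / 2 + (l : ℤ) * d - (b : ℤ) * c) *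
          Polynomial.toLaurent (gaussInt a l) *
          Polynomial.toLaurent (gaussInt ((a : ℤ) + b - l) ((c : ℤ) - l)) := by
  have hR : rhsSum a b c d = ∑ l ∈ Finset.range (c + 1),
        (-1 : LaurentPolynomial ℤ) ^ l *
          LaurentPolynomial.T (((l : ℤ) * (l + 1)) / 2 + (l : ℤ) * d - (b : ℤ) * c) *
          Polynomial.toLaurent (gaussInt a l) *
          Polynomial.toLaurent (gaussInt ((a : ℤ) + b - l) ((c : ℤ) - l)) := by
    rw [rhsSum, Nat.sum_antidiagonal_eq_sum_range_succ_mk]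
    refine sum_congr rfl fun l hl => ?_
    have hlc : l ≤ c := by simpa [Nat.lt_succ_iff] using hl
    by_cases hla : l ≤ a
    · have h1 : (a : ℤ) + b - l = (a + b - l : ℕ) := by omega
      have h2 : (c : ℤ) - l = (c - l : ℕ) := by omega
      rw [h1, h2, toLaurent_gaussInt, toLaurent_gaussInt]
    · rw [toLaurent_gaussInt, gaussL_eq_zero a l (by omega)]
      simp
  rw [← hR, ← lhsSum_eq_rhsSum, lhsSum, Nat.sum_antidiagonal_eq_sum_range_succ_mk]
  -- Both sums are compared with the sum over an interval containing both index sets.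
  trans ∑ k ∈ Finset.Icc (min ((b : ℤ) - d) 0) (c : ℤ),
        LaurentPolynomial.T (-(k * ((b : ℤ) + c - k))) *
          (∏ i ∈ Finset.Icc ((d : ℤ) - b + k + 1) ((d : ℤ) - b + c),
            (1 - LaurentPolynomial.T i)) *
          Polynomial.toLaurent (gaussInt b k) *
          Polynomial.toLaurent (gaussInt a ((c : ℤ) - k))
  · refine sum_subset ?_ fun k hk hk' => ?_
    · intro k hk
      simp only [mem_Icc] at *
      omega
    · simp only [mem_Icc] at hk hk'
      by_cases hkb : (b : ℤ) < k
      · rw [gaussInt_eq_zero b k (Or.inr hkb)]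
        simp
      · -- For `k < b - d` the product contains the factor `1 - t ^ 0`.
        rw [prod_eq_zero (i := (0 : ℤ)) (by simp only [mem_Icc]; omega) (by simp)]
        simp
  · refine (sum_of_injOn (fun k : ℕ => (k : ℤ)) (fun _ _ _ _ h => by simpa using h) ?_ ?_ ?_).symm
    · intro k hk
      simp only [coe_range, Set.mem_Iio, coe_Icc, Set.mem_Icc] at *
      omega
    · intro k hk hk'
      have hk0 : k < 0 := by
        by_contra! h
        refine hk' ⟨k.toNat, ?_, by simp [h]⟩
        simp only [coe_range, Set.mem_Iio, mem_Icc] at *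
        omega
      rw [gaussInt_eq_zero b k (Or.inl hk0)]
      simp
    · intro k hk
      have hkc : k ≤ c := by simpa [Nat.lt_succ_iff] using hk
      obtain ⟨m, rfl⟩ := Nat.exists_eq_add_of_le hkc
      have h1 : ((k + m : ℕ) : ℤ) - k = m := by push_cast; ring
      have h2 : (d : ℤ) - b + (k + m : ℕ) = d - b + k + m := by push_cast; ring
      have h3 : (b : ℤ) + (k + m : ℕ) - k = b + m := by push_cast; ring
      simp only [h1, h2, h3, prod_Icc_eq_prodT, toLaurent_gaussInt, Nat.add_sub_cancel_left]
end
end
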